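/- Let Y_1, Y_2 be i.i.d. real random variables with |Y_1| regularly varying with index α>0, and let (a_n) satisfy n·P(|Y_1|>a_n)→1. Let G_1, G_2 be random vectors in ℝ^d with E|G_1|^{α+ε}<∞ and E|G_2|^{α+ε}<∞ for some ε>0, such that Y_1 is independent of G_1 and Y_2 is independent of the triple (G_1, G_2, Y_1). Then for every M>0, n·P( |G_1 Y_1| > M a_n and |G_2 Y_2| > M a_n ) → 0 as n→∞. -/

import Mathlib

/-!
Let `F x = P(|Y₂| > x)`. A Potter-type bound gives `F (x / r) ≤ C (1 + r ^ p) F x` for large `x`,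
uniformly in `r ≥ 0`, where `p = α + ε`. Since `Y₂` is independent of `(Y₁ G₁, G₂)`, integrating it
out with `r = ‖G₂‖` yields
`n P(‖Y₁ G₁‖ > M aₙ, ‖Y₂ G₂‖ > M aₙ) ≤ C · n F(M aₙ) · E[1 + ‖G₂‖ ^ p; ‖Y₁ G₁‖ > M aₙ]`.
By regular variation `n F(M aₙ)` converges, and the expectation is that of a fixed integrable
variable over events whose probabilities tend to `0`.
-/

open MeasureTheory ProbabilityTheory Filter
open scoped ProbabilityTheory

/-- A nonnegative random variable `R` is regularly varying with index `α > 0`. -/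
def IsRegVarTail {Ω : Type*} [MeasureSpace Ω] (α : ℝ) (R : Ω → ℝ) : Prop :=
  (∀ x : ℝ, 0 < (ℙ : Measure Ω) {ω | R ω > x}) ∧
  (∀ t : ℝ, 0 < t →
    Tendsto (fun x : ℝ =>
      ((ℙ : Measure Ω) {ω | R ω > t * x}).toReal / ((ℙ : Measure Ω) {ω | R ω > x}).toReal)
      atTop (nhds (t ^ (-α))))

/-- The tail function `x ↦ μ(X > x)` of a real random variable `X`, as a real number. -/
noncomputable def tailProb {Ω : Type*} [MeasurableSpace Ω] (μ : Measure Ω) (X : Ω → ℝ)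
    (x : ℝ) : ℝ :=
  μ.real {ω | X ω > x}

section TailProb

variable {Ω Ω' : Type*} [MeasurableSpace Ω] [MeasurableSpace Ω'] {μ : Measure Ω} {ν : Measure Ω'}
  {X : Ω → ℝ} {X' : Ω' → ℝ}

lemma tailProb_eq_of_identDistrib (h : IdentDistrib X X' μ ν) : tailProb μ X = tailProb ν X' :=
  funext fun _ => congrArg ENNReal.toReal (h.measure_mem_eq measurableSet_Ioi)

variable [IsFiniteMeasure μ]

lemma antitone_tailProb : Antitone (tailProb μ X) :=
  fun _ _ hxy => measureReal_mono fun _ hω => hxy.trans_lt hω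

lemma bddAbove_range_tailProb : BddAbove (Set.range (tailProb μ X)) :=
  ⟨μ.real Set.univ, Set.forall_mem_range.2 fun _ => measureReal_mono (Set.subset_univ _)⟩

lemma tendsto_measure_gt_atTop (hX : AEMeasurable X μ) :
    Tendsto (fun x => μ {ω | X ω > x}) atTop (nhds 0) := by
  have h := tendsto_measure_iInter_atTop (μ := μ) (s := fun x : ℝ => {ω | X ω > x})
    (fun _ => hX.nullMeasurable measurableSet_Ioi)
    (fun _ _ hxy _ hω => hxy.trans_lt hω) ⟨0, measure_ne_top _ _⟩
  have hempty : ⋂ x : ℝ, {ω | X ω > x} = ∅ :=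
    Set.eq_empty_of_forall_notMem fun ω hω => lt_irrefl (X ω) (Set.mem_iInter.1 hω (X ω))
  rwa [hempty, measure_empty] at h

end TailProb

section PotterBound

variable {F : ℝ → ℝ} {x₀ : ℝ}

lemma le_mul_pow_mul_of_half_le {B q : ℝ} (hF : Antitone F) (hpos : ∀ x, 0 < F x)
    (hB : ∀ x, F x ≤ B) (hq : 1 ≤ q) (hhalf : ∀ x, x₀ ≤ x → F (x / 2) ≤ q * F x) (k : ℕ) {x : ℝ}
    (hx : x₀ ≤ x) : F (x / 2 ^ k) ≤ B / F x₀ * q ^ k * F x := by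
  have hB₀ : 0 ≤ B := (hpos x₀).le.trans (hB x₀)
  have hF₀ := hpos x₀
  induction k generalizing x with
  | zero =>
    have hC : 1 ≤ B / F x₀ := (one_le_div hF₀).2 (hB x₀)
    simpa using le_mul_of_one_le_left (hpos x).le hC
  | succ k ih =>
    have hsplit : F (x / 2 ^ (k + 1)) ≤ B / F x₀ * q ^ k * F (x / 2) := by
      rcases le_total x₀ (x / 2) with h | h
      · simpa only [pow_succ', div_div] using ih h
      · -- Once halving leaves `[x₀, ∞)`, the crude bound `B` costs only the factor `B / F x₀`.
        calc F (x / 2 ^ (k + 1)) ≤ B := hB _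
          _ = B / F x₀ * 1 * F x₀ := by field_simp
          _ ≤ B / F x₀ * q ^ k * F (x / 2) := by
            gcongr
            · exact one_le_pow₀ hq
            · exact hF h
    calc F (x / 2 ^ (k + 1)) ≤ B / F x₀ * q ^ k * F (x / 2) := hsplit
      _ ≤ B / F x₀ * q ^ k * (q * F x) := by gcongr; exact hhalf x hx
      _ = B / F x₀ * q ^ (k + 1) * F x := by ring

lemma exists_potter_bound {p : ℝ} (hF : Antitone F) (hpos : ∀ x, 0 < F x)
    (hbdd : BddAbove (Set.range F)) (hp : 0 ≤ p) (hx₀ : 0 ≤ x₀)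
    (hhalf : ∀ x, x₀ ≤ x → F (x / 2) ≤ 2 ^ p * F x) :
    ∃ C, ∀ x r, x₀ ≤ x → 1 ≤ r → F (x / r) ≤ C * r ^ p * F x := by
  obtain ⟨B, hB⟩ := hbdd
  replace hB : ∀ x, F x ≤ B := fun x => hB ⟨x, rfl⟩
  have hC : 0 ≤ B / F x₀ := div_nonneg ((hpos x₀).le.trans (hB x₀)) (hpos x₀).le
  have h2p : (1 : ℝ) ≤ 2 ^ p := Real.one_le_rpow one_le_two hp
  refine ⟨B / F x₀ * 2 ^ p, fun x r hx hr => ?_⟩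
  obtain ⟨k, hkr, hrk⟩ := exists_nat_pow_near hr one_lt_two
  have hFx := hpos x
  calc F (x / r) ≤ F (x / 2 ^ (k + 1)) :=
        hF (div_le_div_of_nonneg_left (hx₀.trans hx) (by positivity) hrk.le)
    _ ≤ B / F x₀ * (2 ^ p) ^ (k + 1) * F x :=
        le_mul_pow_mul_of_half_le hF hpos hB h2p hhalf _ hx
    _ = B / F x₀ * 2 ^ p * (2 ^ k) ^ p * F x := by
        rw [← Real.rpow_pow_comm zero_le_two]; ring
    _ ≤ B / F x₀ * 2 ^ p * r ^ p * F x := by gcongr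

end PotterBound

section IndependentProduct

variable {Ω β γ : Type*} [MeasurableSpace Ω] [MeasurableSpace β] [MeasurableSpace γ]
  {μ : Measure Ω} [IsFiniteMeasure μ] {W : Ω → β} {Z : Ω → γ} {S : Set β} {T : Set (β × γ)}

lemma measure_prodMk_mem_eq_setLIntegral_of_indepFun (hW : Measurable W) (hZ : Measurable Z)
    (hWZ : IndepFun W Z μ) (hS : MeasurableSet S) (hT : MeasurableSet T) :
    μ {ω | W ω ∈ S ∧ (W ω, Z ω) ∈ T} =
      ∫⁻ ω in W ⁻¹' S, μ {ω' | (W ω, Z ω') ∈ T} ∂μ := by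
  calc μ {ω | W ω ∈ S ∧ (W ω, Z ω) ∈ T}
      = (μ.map fun ω => (W ω, Z ω)) (T ∩ S ×ˢ Set.univ) := by
        rw [Measure.map_apply (hW.prodMk hZ) (hT.inter (hS.prod .univ))]
        congr 1 with ω
        simp [and_comm]
    _ = ((μ.map W).restrict S).prod (μ.map Z) T := by
        rw [hWZ.map_prod_eq_prod_map_map hW.aemeasurable hZ.aemeasurable,
          ← Measure.restrict_apply hT, ← Measure.prod_restrict, Measure.restrict_univ]
    _ = ∫⁻ ω in W ⁻¹' S, (μ.map Z) (Prod.mk (W ω) ⁻¹' T) ∂μ := by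
        rw [Measure.prod_apply hT, setLIntegral_map hS (measurable_measure_prodMk_left hT) hW]
    _ = ∫⁻ ω in W ⁻¹' S, μ {ω' | (W ω, Z ω') ∈ T} ∂μ := by
        simp_rw [Measure.map_apply hZ (measurable_prodMk_left hT)]
        rfl

lemma measureReal_prodMk_mem_le_setIntegral_of_indepFun (hW : Measurable W) (hZ : Measurable Z)
    (hWZ : IndepFun W Z μ) (hS : MeasurableSet S) (hT : MeasurableSet T) {g : β → ℝ}
    (hg : Integrable (fun ω => g (W ω)) μ) (hTg : ∀ w, μ.real {ω | (w, Z ω) ∈ T} ≤ g w) :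
    μ.real {ω | W ω ∈ S ∧ (W ω, Z ω) ∈ T} ≤ ∫ ω in W ⁻¹' S, g (W ω) ∂μ := by
  have hg₀ : ∀ w, 0 ≤ g w := fun w => measureReal_nonneg.trans (hTg w)
  refine ENNReal.toReal_le_of_le_ofReal (integral_nonneg fun ω => hg₀ (W ω)) ?_
  rw [measure_prodMk_mem_eq_setLIntegral_of_indepFun hW hZ hWZ hS hT,
    ofReal_integral_eq_lintegral_ofReal hg.integrableOn (ae_of_all _ fun ω => hg₀ (W ω))]
  refine lintegral_mono fun ω => ?_
  rw [← ofReal_measureReal]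
  exact ENNReal.ofReal_le_ofReal (hTg (W ω))

end IndependentProduct

namespace IsRegVarTail

variable {Ω : Type*} [MeasureSpace Ω] {α : ℝ} {R : Ω → ℝ}

lemma of_identDistrib {Ω' : Type*} [MeasureSpace Ω'] {R' : Ω' → ℝ} (hR : IsRegVarTail α R)
    (h : IdentDistrib R R') : IsRegVarTail α R' := by
  have htail : ∀ x, ℙ {ω | R ω > x} = ℙ {ω | R' ω > x} := fun x =>
    h.measure_mem_eq measurableSet_Ioi
  simpa only [IsRegVarTail, htail] using hR

lemma tendsto_tailProb_div (hR : IsRegVarTail α R) {t : ℝ} (ht : 0 < t) :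
    Tendsto (fun x => tailProb ℙ R (t * x) / tailProb ℙ R x) atTop (nhds (t ^ (-α))) :=
  hR.2 t ht

variable [IsFiniteMeasure (ℙ : Measure Ω)]

lemma tailProb_pos (hR : IsRegVarTail α R) (x : ℝ) : 0 < tailProb ℙ R x :=
  ENNReal.toReal_pos (hR.1 x).ne' (measure_ne_top _ _)

lemma index_nonneg (hR : IsRegVarTail α R) : 0 ≤ α := by
  have hle : (2 : ℝ) ^ (-α) ≤ 1 := by
    refine le_of_tendsto (hR.tendsto_tailProb_div two_pos) ?_
    filter_upwards [eventually_ge_atTop 0] with x hx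
    exact div_le_one_of_le₀ (antitone_tailProb (by linarith)) (hR.tailProb_pos x).le
  by_contra! hα
  exact hle.not_gt (Real.one_lt_rpow one_lt_two (neg_pos.2 hα))

lemma eventually_tailProb_half_le {p : ℝ} (hR : IsRegVarTail α R) (hp : α < p) :
    ∀ᶠ x in atTop, tailProb ℙ R (x / 2) ≤ 2 ^ p * tailProb ℙ R x := by
  have hlt : (1 / 2 : ℝ) ^ (-α) < 2 ^ p := by
    rw [one_div, Real.inv_rpow zero_le_two, Real.rpow_neg zero_le_two, inv_inv]
    exact Real.rpow_lt_rpow_of_exponent_lt one_lt_two hp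
  filter_upwards [(hR.tendsto_tailProb_div one_half_pos).eventually_lt_const hlt] with x hx
  rw [one_div_mul_eq_div] at hx
  exact ((div_lt_iff₀ (hR.tailProb_pos x)).1 hx).le

lemma exists_tailProb_const_mul_le {p : ℝ} (hR : IsRegVarTail α R) (hp : α < p) :
    ∃ C, ∀ᶠ x in atTop, ∀ r, 0 ≤ r →
      tailProb ℙ (fun ω => r * R ω) x ≤ C * tailProb ℙ R x * (1 + r ^ p) := by
  obtain ⟨x₀, hx₀, hhalf⟩ :=
    (atTop_basis' (0 : ℝ)).eventually_iff.1 (hR.eventually_tailProb_half_le hp)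
  obtain ⟨C, hpotter⟩ := exists_potter_bound antitone_tailProb hR.tailProb_pos
    bddAbove_range_tailProb (hR.index_nonneg.trans hp.le) hx₀ fun _ hx => hhalf hx
  refine ⟨max C 1, ?_⟩
  filter_upwards [eventually_ge_atTop x₀] with x hx r hr
  have hx_nonneg : 0 ≤ x := hx₀.trans hx
  have htail := (hR.tailProb_pos x).le
  have hrp : 0 ≤ r ^ p := Real.rpow_nonneg hr p
  rcases le_total r 1 with hr1 | hr1
  · have hsub : {ω | r * R ω > x} ⊆ {ω | R ω > x} := fun ω (hω : x < r * R ω) =>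
      hω.trans_le (mul_le_of_le_one_left (pos_of_mul_pos_right (hx_nonneg.trans_lt hω) hr).le hr1)
    calc tailProb ℙ (fun ω => r * R ω) x ≤ tailProb ℙ R x := measureReal_mono hsub
      _ = 1 * tailProb ℙ R x * (1 + 0) := by ring
      _ ≤ max C 1 * tailProb ℙ R x * (1 + r ^ p) := by gcongr; exact le_max_right _ _
  · have hr0 : 0 < r := one_pos.trans_le hr1
    calc tailProb ℙ (fun ω => r * R ω) x = tailProb ℙ R (x / r) := by
          simp only [tailProb, gt_iff_lt, div_lt_iff₀' hr0]
      _ ≤ C * r ^ p * tailProb ℙ R x := hpotter x r hx hr1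
      _ = C * tailProb ℙ R x * (0 + r ^ p) := by ring
      _ ≤ max C 1 * tailProb ℙ R x * (1 + r ^ p) := by
          gcongr
          · exact le_max_left _ _
          · exact zero_le_one

section Norming

variable {a : ℕ → ℝ} {c : ℝ}

lemma tendsto_atTop_of_tendsto_nat_mul_tailProb (hR : IsRegVarTail α R)
    (ha : Tendsto (fun n : ℕ => n * tailProb ℙ R (a n)) atTop (nhds c)) :
    Tendsto a atTop atTop := by
  have htail : Tendsto (fun n => tailProb ℙ R (a n)) atTop (nhds 0) := by
    have h := ha.mul (tendsto_inv_atTop_nhds_zero_nat (𝕜 := ℝ))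
    rw [mul_zero] at h
    refine h.congr' ?_
    filter_upwards [eventually_ne_atTop 0] with n hn
    field_simp
  refine tendsto_atTop.2 fun b => ?_
  filter_upwards [htail.eventually_lt_const (hR.tailProb_pos b)] with n hn
  exact (antitone_tailProb.reflect_lt hn).le

lemma tendsto_nat_mul_tailProb_const_mul (hR : IsRegVarTail α R)
    (ha : Tendsto (fun n : ℕ => n * tailProb ℙ R (a n)) atTop (nhds c)) {t : ℝ} (ht : 0 < t) :
    Tendsto (fun n : ℕ => n * tailProb ℙ R (t * a n)) atTop (nhds (c * t ^ (-α))) := by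
  have hatop := hR.tendsto_atTop_of_tendsto_nat_mul_tailProb ha
  refine (ha.mul ((hR.tendsto_tailProb_div ht).comp hatop)).congr fun n => ?_
  rw [Function.comp_apply, mul_assoc, mul_div_cancel₀ _ (hR.tailProb_pos _).ne']

end Norming

section IndependentFactor

variable {β : Type*} [MeasurableSpace β] {W : Ω → β} {ρ : β → ℝ} {p : ℝ}

lemma exists_measureReal_mem_and_mul_gt_le (hR : IsRegVarTail α R) (hp : α < p)
    (hW : Measurable W) (hR_meas : Measurable R) (hWR : IndepFun W R)
    (hρ : Measurable ρ) (hρ₀ : ∀ w, 0 ≤ ρ w) (hmom : Integrable fun ω => ρ (W ω) ^ p) :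
    ∃ C, ∀ᶠ x in atTop, ∀ S, MeasurableSet S →
      (ℙ : Measure Ω).real {ω | W ω ∈ S ∧ ρ (W ω) * R ω > x} ≤
        C * tailProb ℙ R x * ∫ ω in W ⁻¹' S, (1 + ρ (W ω) ^ p) := by
  obtain ⟨C, hbound⟩ := hR.exists_tailProb_const_mul_le hp
  refine ⟨C, ?_⟩
  filter_upwards [hbound] with x hx S hS
  rw [← integral_const_mul]
  exact measureReal_prodMk_mem_le_setIntegral_of_indepFun hW hR_meas hWR hS
    (T := {q | ρ q.1 * q.2 > x})
    (measurableSet_lt measurable_const ((hρ.comp measurable_fst).mul measurable_snd))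
    (((integrable_const 1).add hmom).const_mul _) fun w => hx (ρ w) (hρ₀ w)

theorem tendsto_nat_mul_measureReal_mem_and_mul_gt (hR : IsRegVarTail α R) (hp : α < p)
    (hW : Measurable W) (hR_meas : Measurable R) (hWR : IndepFun W R)
    (hρ : Measurable ρ) (hρ₀ : ∀ w, 0 ≤ ρ w) (hmom : Integrable fun ω => ρ (W ω) ^ p)
    {a : ℕ → ℝ} {c M : ℝ} (hM : 0 < M)
    (ha : Tendsto (fun n : ℕ => n * tailProb ℙ R (a n)) atTop (nhds c))
    {S : ℕ → Set β} (hS : ∀ n, MeasurableSet (S n))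
    (hS₀ : Tendsto (fun n => (ℙ : Measure Ω) (W ⁻¹' S n)) atTop (nhds 0)) :
    Tendsto (fun n : ℕ => n * (ℙ : Measure Ω).real {ω | W ω ∈ S n ∧ ρ (W ω) * R ω > M * a n})
      atTop (nhds 0) := by
  obtain ⟨C, hbound⟩ :=
    hR.exists_measureReal_mem_and_mul_gt_le hp hW hR_meas hWR hρ hρ₀ hmom
  have hmoment : Tendsto (fun n => ∫ ω in W ⁻¹' S n, (1 + ρ (W ω) ^ p)) atTop (nhds 0) :=
    ((integrable_const 1).add hmom).tendsto_setIntegral_nhds_zero hS₀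
  have hlevel : Tendsto (fun n => M * a n) atTop atTop :=
    (hR.tendsto_atTop_of_tendsto_nat_mul_tailProb ha).const_mul_atTop hM
  have hupper : Tendsto (fun n : ℕ => C * (n * tailProb ℙ R (M * a n)) *
      ∫ ω in W ⁻¹' S n, (1 + ρ (W ω) ^ p)) atTop (nhds 0) := by
    simpa only [mul_zero] using
      ((hR.tendsto_nat_mul_tailProb_const_mul ha hM).const_mul C).mul hmoment
  refine squeeze_zero' (.of_forall fun n => by positivity) ?_ hupper
  filter_upwards [hlevel.eventually hbound] with n hn
  calc n * (ℙ : Measure Ω).real {ω | W ω ∈ S n ∧ ρ (W ω) * R ω > M * a n}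
      ≤ n * (C * tailProb ℙ R (M * a n) * ∫ ω in W ⁻¹' S n, (1 + ρ (W ω) ^ p)) := by
        gcongr
        exact hn (S n) (hS n)
    _ = C * (n * tailProb ℙ R (M * a n)) * ∫ ω in W ⁻¹' S n, (1 + ρ (W ω) ^ p) := by ring

end IndependentFactor

end IsRegVarTail

theorem stmt_10_general {Ω E : Type*} [MeasureSpace Ω] [IsProbabilityMeasure (ℙ : Measure Ω)]
    [NormedAddCommGroup E] [NormedSpace ℝ E] [MeasurableSpace E] [OpensMeasurableSpace E]
    {α p c L M : ℝ} {X Y : Ω → ℝ} {G : Ω → E} {a : ℕ → ℝ}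
    (hX : Measurable X) (hY : Measurable Y) (hG : Measurable G)
    (hindep : IndepFun Y fun ω => (X ω, G ω))
    (hreg : IsRegVarTail α fun ω => |Y ω|) (hp : α < p)
    (hmom : Integrable fun ω => ‖G ω‖ ^ p)
    (ha : Tendsto (fun n : ℕ => n * tailProb ℙ (fun ω => |Y ω|) (a n)) atTop (nhds c))
    (hL : 0 < L) (hM : 0 < M) :
    Tendsto (fun n : ℕ => n *
        (ℙ : Measure Ω).real {ω | X ω > L * a n ∧ ‖Y ω • G ω‖ > M * a n})
      atTop (nhds 0) := by
  have hlevel : Tendsto (fun n => L * a n) atTop atTop :=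
    (hreg.tendsto_atTop_of_tendsto_nat_mul_tailProb ha).const_mul_atTop hL
  have hlim := hreg.tendsto_nat_mul_measureReal_mem_and_mul_gt hp (hX.prodMk hG) hY.abs
    (hindep.symm.comp measurable_id measurable_id.abs) (ρ := fun w => ‖w.2‖)
    measurable_snd.norm (fun _ => norm_nonneg _) hmom hM ha
    (S := fun n => {w | w.1 > L * a n})
    (fun _ => measurableSet_lt measurable_const measurable_fst)
    ((tendsto_measure_gt_atTop hX.aemeasurable).comp hlevel)
  simpa only [Set.mem_ofPred_eq, norm_smul, Real.norm_eq_abs, mul_comm |_|] using hlim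

/-- for i.i.d. `Y_1, Y_2` with `|Y_1|` regularly varying of index `α` and
random vectors `G_1, G_2` with `α+ε` moments, `Y_1 ⟂ G_1` and `Y_2 ⟂ (G_1,G_2,Y_1)`,
one has `n·P(|G_1Y_1| > M a_n, |G_2Y_2| > M a_n) → 0` for every `M > 0`. -/
theorem stmt_10 {Ω : Type*} [MeasureSpace Ω] [IsProbabilityMeasure (ℙ : Measure Ω)]
    (d : ℕ) (α : ℝ) (hα : 0 < α)
    (Y₁ Y₂ : Ω → ℝ) (G₁ G₂ : Ω → EuclideanSpace ℝ (Fin d))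
    (hY₁ : Measurable Y₁) (hY₂ : Measurable Y₂)
    (hG₁ : Measurable G₁) (hG₂ : Measurable G₂)
    (hident : Measure.map Y₂ (ℙ : Measure Ω) = Measure.map Y₁ (ℙ : Measure Ω))
    (hindep₁ : IndepFun Y₁ G₁)
    (hindep₂ : IndepFun Y₂ (fun ω => (G₁ ω, G₂ ω, Y₁ ω)))
    (hreg : IsRegVarTail α (fun ω => |Y₁ ω|))
    (ε : ℝ) (hε : 0 < ε)
    (hmom₁ : Integrable (fun ω => ‖G₁ ω‖ ^ (α + ε)))
    (hmom₂ : Integrable (fun ω => ‖G₂ ω‖ ^ (α + ε)))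
    (a : ℕ → ℝ)
    (ha : Tendsto (fun n : ℕ => (n : ℝ) * ((ℙ : Measure Ω) {ω | |Y₁ ω| > a n}).toReal)
      atTop (nhds 1)) :
    ∀ M : ℝ, 0 < M →
      Tendsto (fun n : ℕ => (n : ℝ) *
          ((ℙ : Measure Ω) {ω | ‖Y₁ ω • G₁ ω‖ > M * a n ∧ ‖Y₂ ω • G₂ ω‖ > M * a n}).toReal)
        atTop (nhds 0) := by
  have habs : IdentDistrib (fun ω => |Y₁ ω|) (fun ω => |Y₂ ω|) :=
    IdentDistrib.norm ⟨hY₁.aemeasurable, hY₂.aemeasurable, hident.symm⟩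
  exact fun M hM => stmt_10_general (hY₁.smul hG₁).norm hY₂ hG₂
    (hindep₂.comp measurable_id
      ((measurable_snd.snd.smul measurable_fst).norm.prodMk measurable_snd.fst))
    (hreg.of_identDistrib habs) (lt_add_of_pos_right α hε) hmom₂
    (by rwa [← tailProb_eq_of_identDistrib habs]) hM hM
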